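/- For n ≥ 1, the set 𝕊_n of derivations D = Σ_{j=1}^n p_j ∂/∂x_j of k[x₁, …, x_n] (where p_j = D(x_j)) satisfying Σ_{j=1}^n ∂p_j/∂x_j = 0 is a Lie subalgebra of the Lie algebra of all k-linear derivations of k[x₁, …, x_n]; and for every n ≥ 2, the universal enveloping algebra U(𝕊_n) is neither left noetherian nor right noetherian. -/

import Mathlib

/-!
Statement 17: For n ≥ 1, the set 𝕊ₙ of derivations D = Σⱼ pⱼ ∂/∂xⱼ of k[x₁,…,xₙ]
(where pⱼ = D(xⱼ)) satisfying Σⱼ ∂pⱼ/∂xⱼ = 0 is a Lie subalgebra of the Lie algebra of all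
k-linear derivations of k[x₁,…,xₙ]; and for every n ≥ 2, U(𝕊ₙ) is neither left noetherian
nor right noetherian.
-/

noncomputable section

open MvPolynomial

/-!
The subalgebra property is the identity `div [D, E] = D (div E) - E (div D)`.

For distinct variables `x` and `y` the shears `aᵢ = yⁱ ∂/∂x` are divergence-free. Let vector fields
act diagonally on polynomial functions of `m + 1` points `(xₛ, yₛ, …)`, and let `v` be the
Vandermonde determinant of the `yₛ` with its last column `yₛᵐ` replaced by `xₛ`. Every `aᵢ` kills
the `yₛ`, so `aᵢ v` is obtained by replacing the last column with `yₛⁱ`: it vanishes for `i < m` and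
is the nonzero Vandermonde determinant for `i = m`. Hence the annihilator of `v` is a left ideal of
the enveloping algebra containing `a₀, …, aₘ₋₁` but not `aₘ`, and the left ideals
`(a₀, …, aₘ)` increase strictly. The principal anti-automorphism exchanges left and right.
-/

theorem not_isNoetherian_of_forall_exists_submodule {R M : Type*} [Semiring R] [AddCommMonoid M]
    [Module R M] (a : ℕ → M) (h : ∀ m, ∃ N : Submodule R M, (∀ i < m, a i ∈ N) ∧ a m ∉ N) :
    ¬ IsNoetherian R M := by
  intro hM
  let N : ℕ →o Submodule R M :=
    ⟨fun m => Submodule.span R (a '' Set.Iio m), fun _ _ hle =>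
      Submodule.span_mono (Set.image_mono (Set.Iio_subset_Iio hle))⟩
  obtain ⟨m, hstable⟩ := monotone_stabilizes_iff_noetherian.mpr hM N
  obtain ⟨P, hP, ham⟩ := h m
  have hNP : N m ≤ P := Submodule.span_le.mpr (Set.image_subset_iff.mpr hP)
  have ham' : a m ∈ N (m + 1) := Submodule.subset_span ⟨m, m.lt_succ_self, rfl⟩
  exact ham (hNP (hstable (m + 1) m.le_succ ▸ ham'))

section Enveloping

open UniversalEnvelopingAlgebra MulOpposite

attribute [local instance] LieRing.ofAssociativeRing

variable (k L : Type*) [CommRing k] [LieRing L] [LieAlgebra k L]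

/-- The principal anti-automorphism `x ↦ -x` of an enveloping algebra, as a homomorphism to the
opposite algebra. -/
def envelopingAntipode :
    UniversalEnvelopingAlgebra k L →ₐ[k] (UniversalEnvelopingAlgebra k L)ᵐᵒᵖ :=
  lift k
    { toFun x := op (-ι k x)
      map_add' x y := by rw [map_add, neg_add, op_add]
      map_smul' c x := by rw [map_smul, ← smul_neg, op_smul, RingHom.id_apply]
      map_lie' {x y} := unop_injective <| by
        simp only [LieHom.map_lie, LieRing.of_associative_ring_bracket, unop_op, unop_sub, unop_mul]
        noncomm_ring }

theorem envelopingAntipode_ι (x : L) : envelopingAntipode k L (ι k x) = op (-ι k x) :=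
  lift_ι_apply k _ x

theorem unop_envelopingAntipode_involutive :
    Function.Involutive fun u => unop (envelopingAntipode k L u) := by
  have h : (AlgHom.opComm (envelopingAntipode k L)).comp (envelopingAntipode k L) =
      AlgHom.id k (UniversalEnvelopingAlgebra k L) := by
    refine UniversalEnvelopingAlgebra.hom_ext k (LieHom.ext fun x => ?_)
    change unop (envelopingAntipode k L (unop (envelopingAntipode k L (ι k x)))) = ι k x
    rw [envelopingAntipode_ι, unop_op, map_neg, envelopingAntipode_ι, unop_neg, unop_op, neg_neg]
  exact fun u => DFunLike.congr_fun h u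

theorem isNoetherianRing_enveloping_op_iff :
    IsNoetherianRing (UniversalEnvelopingAlgebra k L)ᵐᵒᵖ ↔
      IsNoetherianRing (UniversalEnvelopingAlgebra k L) := by
  have hinv := unop_envelopingAntipode_involutive k L
  constructor <;> intro
  · exact isNoetherianRing_of_surjective _ _
      (AlgHom.opComm (envelopingAntipode k L)).toRingHom fun u => ⟨op _, hinv u⟩
  · exact isNoetherianRing_of_surjective _ _ (envelopingAntipode k L).toRingHom
      fun u => ⟨_, unop_injective (hinv u.unop)⟩

variable {k L}

theorem not_isNoetherianRing_enveloping_of_representations (a : ℕ → L) (V : ℕ → Type*)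
    [∀ m, AddCommGroup (V m)] [∀ m, Module k (V m)] (ρ : ∀ m, L →ₗ⁅k⁆ Module.End k (V m))
    (v : ∀ m, V m) (hlt : ∀ m, ∀ i < m, ρ m (a i) (v m) = 0) (hself : ∀ m, ρ m (a m) (v m) ≠ 0) :
    ¬ IsNoetherianRing (UniversalEnvelopingAlgebra k L) := by
  refine not_isNoetherian_of_forall_exists_submodule (fun i => ι k (a i)) fun m => ?_
  let annihilator : Ideal (UniversalEnvelopingAlgebra k L) :=
    (Ideal.torsionOf (Module.End k (V m)) (V m) (v m)).comap (lift k (ρ m))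
  have mem_annihilator (x : L) : ι k x ∈ annihilator ↔ ρ m x (v m) = 0 := by
    rw [Ideal.mem_comap, lift_ι_apply, Ideal.mem_torsionOf_iff, Module.End.smul_def]
  exact ⟨annihilator, fun i hi => (mem_annihilator _).mpr (hlt m i hi),
    fun hm => hself m ((mem_annihilator _).mp hm)⟩

end Enveloping

section Derivation

section Semiring

variable {k A : Type*} [CommSemiring k] [CommSemiring A] [Algebra k A]

theorem derivation_algHom_apply {σ : Type*} (φ : MvPolynomial σ k →ₐ[k] A)
    {D : Derivation k (MvPolynomial σ k) (MvPolynomial σ k)} {E : Derivation k A A}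
    (h : ∀ i, E (φ (X i)) = φ (D (X i))) (p : MvPolynomial σ k) : E (φ p) = φ (D p) := by
  induction p using MvPolynomial.induction_on with
  | C c => rw [← algebraMap_eq, AlgHom.commutes, E.map_algebraMap, D.map_algebraMap, map_zero]
  | add p q hp hq => simp only [map_add, hp, hq]
  | mul_X p i hp => simp only [map_mul, map_add, Derivation.leibniz, smul_eq_mul, hp, h]

theorem derivation_sum_apply {ι M : Type*} [AddCommMonoid M] [Module k M] [Module A M]
    (s : Finset ι) (D : ι → Derivation k A M) (f : A) : (∑ i ∈ s, D i) f = ∑ i ∈ s, D i f := by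
  rw [← Derivation.coeFnAddMonoidHom_apply, map_sum, Finset.sum_apply]
  rfl

end Semiring

variable {k A n : Type*} [CommRing k] [CommRing A] [Algebra k A] [Fintype n] [DecidableEq n]

theorem derivation_adjugate_eq_zero (E : Derivation k A A) {M : Matrix n n A}
    (hM : ∀ i j, E (M i j) = 0) (i j : n) : E (M.adjugate i j) = 0 := by
  have h := derivation_algHom_apply (aeval fun p : n × n => M p.1 p.2) (D := 0) (E := E)
    (fun p => by simp [hM]) ((Matrix.mvPolynomialX n n k).adjugate i j)
  rwa [← Matrix.map_apply (f := aeval _), ← AlgHom.mapMatrix_apply, AlgHom.map_adjugate,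
    Matrix.mvPolynomialX_mapMatrix_aeval, Derivation.zero_apply, map_zero] at h

theorem derivation_cramer (E : Derivation k A A) {M : Matrix n n A}
    (hM : ∀ i j, E (M i j) = 0) (x : n → A) (i : n) :
    E (M.cramer x i) = M.cramer (fun j => E (x j)) i := by
  simp [Matrix.cramer_eq_adjugate_mulVec, Matrix.mulVec, dotProduct,
    derivation_adjugate_eq_zero E hM]

end Derivation

theorem det_vandermonde_X_ne_zero {k σ : Type*} [CommRing k] [Nontrivial k] {n : ℕ}
    {f : Fin n → σ} (hf : Function.Injective f) :
    (Matrix.vandermonde fun i => (X (f i) : MvPolynomial σ k)).det ≠ 0 := by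
  obtain ⟨I, hI⟩ := Ideal.exists_maximal k
  intro h
  have hmap := congrArg (map (Ideal.Quotient.mk I)) h
  rw [Matrix.det_vandermonde] at hmap
  simp only [map_prod, map_sub, map_X, map_zero] at hmap
  rw [← Matrix.det_vandermonde] at hmap
  exact Matrix.det_vandermonde_ne_zero_iff.mpr (X_injective.comp hf) hmap

/-- Polynomial vector fields on affine space with coordinates indexed by `σ`, encoded as
derivations of the polynomial ring. -/
abbrev PolyVectorField (k σ : Type*) [CommRing k] : Type _ :=
  Derivation k (MvPolynomial σ k) (MvPolynomial σ k)

section Divergence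

variable {k σ : Type*} [CommRing k] [Fintype σ]

theorem polyVectorField_eq_sum_smul_pderiv (D : PolyVectorField k σ) :
    D = ∑ i, D (X i) • pderiv i := by
  classical
  ext1 j
  simp [derivation_sum_apply, pderiv_X, Pi.single_apply]

theorem pderiv_lie_eq_sum (D : PolyVectorField k σ) (j : σ) :
    ⁅(pderiv j : PolyVectorField k σ), D⁆ = ∑ i, pderiv j (D (X i)) • pderiv i := by
  classical
  rw [polyVectorField_eq_sum_smul_pderiv ⁅_, D⁆]
  simp [Derivation.commutator_apply, pderiv_X, Pi.single_apply, apply_ite D]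

theorem pderiv_derivation_apply (D : PolyVectorField k σ) (j : σ) (p : MvPolynomial σ k) :
    pderiv j (D p) = D (pderiv j p) + ∑ i, pderiv j (D (X i)) * pderiv i p := by
  rw [← sub_eq_iff_eq_add', ← Derivation.commutator_apply, pderiv_lie_eq_sum]
  simp [derivation_sum_apply]

/-- The divergence `∑ⱼ ∂pⱼ/∂xⱼ` of the vector field `∑ⱼ pⱼ ∂/∂xⱼ`. -/
def divergence : PolyVectorField k σ →ₗ[k] MvPolynomial σ k where
  toFun D := ∑ j, pderiv j (D (X j))
  map_add' D E := by simp only [Derivation.add_apply, map_add, Finset.sum_add_distrib]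
  map_smul' c D := by
    simp only [Derivation.smul_apply, Derivation.map_smul, Finset.smul_sum, RingHom.id_apply]

theorem divergence_apply (D : PolyVectorField k σ) : divergence D = ∑ j, pderiv j (D (X j)) :=
  rfl

theorem divergence_lie (D E : PolyVectorField k σ) :
    divergence ⁅D, E⁆ = D (divergence E) - E (divergence D) := by
  have trace_comm : ∑ j, ∑ i, pderiv j (D (X i)) * pderiv i (E (X j)) =
      ∑ j, ∑ i, pderiv j (E (X i)) * pderiv i (D (X j)) := by
    rw [Finset.sum_comm]
    simp only [mul_comm]
  simp only [divergence_apply, Derivation.commutator_apply, map_sub, map_sum,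
    pderiv_derivation_apply D _ (E _), pderiv_derivation_apply E _ (D _), Finset.sum_sub_distrib,
    Finset.sum_add_distrib, trace_comm]
  ring

variable (k σ) in
/-- The Lie algebra `𝕊ₙ` of divergence-free vector fields. -/
def divergenceFree : LieSubalgebra k (PolyVectorField k σ) where
  toSubmodule := LinearMap.ker divergence
  lie_mem' {D E} hD hE := by
    change divergence D = 0 at hD
    change divergence E = 0 at hE
    change divergence ⁅D, E⁆ = 0
    rw [divergence_lie, hD, hE, map_zero, map_zero, sub_zero]

theorem mem_divergenceFree {D : PolyVectorField k σ} :
    D ∈ divergenceFree k σ ↔ ∑ j, pderiv j (D (X j)) = 0 :=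
  Iff.rfl

end Divergence

section Shear

variable {k σ : Type*} [CommRing k]

variable (k) in
/-- The vector field `yⁱ ∂/∂x`, where `x` and `y` are the coordinates with indices `a` and `b`. -/
def shear (a b : σ) (i : ℕ) : PolyVectorField k σ :=
  (X b ^ i : MvPolynomial σ k) • pderiv a

theorem shear_X_self (a b : σ) (i : ℕ) : shear k a b i (X a) = X b ^ i := by
  simp [shear]

theorem shear_X_of_ne {a c : σ} (hc : c ≠ a) (b : σ) (i : ℕ) : shear k a b i (X c) = 0 := by
  simp [shear, pderiv_X_of_ne hc]

theorem shear_mem_divergenceFree [Fintype σ] {a b : σ} (hab : a ≠ b) (i : ℕ) :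
    shear k a b i ∈ divergenceFree k σ := by
  refine mem_divergenceFree.mpr (Finset.sum_eq_zero fun j _ => ?_)
  rcases eq_or_ne j a with rfl | hj
  · rw [shear_X_self, pderiv_pow, pderiv_X_of_ne hab.symm, mul_zero]
  · rw [shear_X_of_ne hj, map_zero]

end Shear

section Diagonal

attribute [local instance] LieRing.ofAssociativeRing

variable {k σ τ : Type*} [CommRing k]

/-- The vector field on the `τ`-th power of affine space that acts as `D` on every factor. The
variable `X (s, i)` is the `i`-th coordinate of the `s`-th factor. -/
def diagonalField (τ : Type*) (D : PolyVectorField k σ) : PolyVectorField k (τ × σ) :=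
  mkDerivation k fun x => rename (Prod.mk x.1) (D (X x.2))

theorem diagonalField_X (D : PolyVectorField k σ) (s : τ) (i : σ) :
    diagonalField τ D (X (s, i)) = rename (Prod.mk s) (D (X i)) :=
  mkDerivation_X _ _ _

theorem diagonalField_rename (D : PolyVectorField k σ) (s : τ) (p : MvPolynomial σ k) :
    diagonalField τ D (rename (Prod.mk s) p) = rename (Prod.mk s) (D p) :=
  derivation_algHom_apply (rename (Prod.mk s)) (fun i => by rw [rename_X, diagonalField_X]) p

variable (k σ τ) in
/-- The diagonal action of vector fields on functions of several points, as a Lie algebra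
homomorphism; composed with `LieModule.toEnd` it is a representation. -/
def diagonalLieHom : PolyVectorField k σ →ₗ⁅k⁆ PolyVectorField k (τ × σ) where
  toFun := diagonalField τ
  map_add' D E := by
    ext1 ⟨s, i⟩
    simp only [Derivation.add_apply, diagonalField_X, map_add]
  map_smul' c D := by
    ext1 ⟨s, i⟩
    simp only [Derivation.smul_apply, diagonalField_X, map_smul, RingHom.id_apply]
  map_lie' {D E} := by
    ext1 ⟨s, i⟩
    simp only [Derivation.commutator_apply, diagonalField_X, diagonalField_rename, map_sub]

/-- The function on `m + 1` points that is the Vandermonde determinant of their `b`-coordinates,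
with its last column replaced by their `a`-coordinates. -/
def vandermondeVector (k : Type*) [CommRing k] (a b : σ) (m : ℕ) :
    MvPolynomial (Fin (m + 1) × σ) k :=
  (Matrix.vandermonde fun s => X (s, b)).cramer (fun s => X (s, a)) (Fin.last m)

theorem diagonalField_shear_vandermondeVector {a b : σ} (hab : a ≠ b) (m : ℕ) (i : Fin (m + 1)) :
    diagonalField (Fin (m + 1)) (shear k a b i) (vandermondeVector k a b m) =
      if Fin.last m = i then (Matrix.vandermonde fun s => X (s, b)).det else 0 := by
  set V : Matrix (Fin (m + 1)) (Fin (m + 1)) (MvPolynomial (Fin (m + 1) × σ) k) :=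
    Matrix.vandermonde fun s => X (s, b)
  have entries_killed (s j) : diagonalField (Fin (m + 1)) (shear k a b i) (V s j) = 0 := by
    simp [V, Matrix.vandermonde_apply, diagonalField_X, shear_X_of_ne hab.symm]
  have column (s) : diagonalField (Fin (m + 1)) (shear k a b i) (X (s, a)) = V s i := by
    simp [V, Matrix.vandermonde_apply, diagonalField_X, shear_X_self]
  rw [vandermondeVector, derivation_cramer _ entries_killed, Matrix.cramer_row_self V _ i column,
    Pi.single_apply]

theorem not_isNoetherianRing_enveloping_divergenceFree [Fintype σ] [Nontrivial k] [Nontrivial σ] :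
    ¬ IsNoetherianRing (UniversalEnvelopingAlgebra k (divergenceFree k σ)) := by
  obtain ⟨a, b, hab⟩ := exists_pair_ne σ
  refine not_isNoetherianRing_enveloping_of_representations
    (fun i => ⟨shear k a b i, shear_mem_divergenceFree hab i⟩)
    (fun m => MvPolynomial (Fin (m + 1) × σ) k)
    (fun m => ((LieModule.toEnd k _ _).comp (diagonalLieHom k σ (Fin (m + 1)))).comp
      (divergenceFree k σ).incl)
    (vandermondeVector k a b) (fun m i hi => ?_) (fun m => ?_)
  · have h := diagonalField_shear_vandermondeVector (k := k) hab m ⟨i, by omega⟩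
    rwa [if_neg (by simpa [Fin.ext_iff] using hi.ne')] at h
  · have h := diagonalField_shear_vandermondeVector (k := k) hab m (Fin.last m)
    rw [if_pos rfl, Fin.val_last] at h
    exact h.trans_ne (det_vandermonde_X_ne_zero (Prod.mk_left_injective b))

end Diagonal

theorem special_subalgebra_and_not_noetherian_general (k : Type*) [CommRing k] [Nontrivial k]
    (σ : Type*) [Fintype σ] :
    ∃ S : LieSubalgebra k (Derivation k (MvPolynomial σ k) (MvPolynomial σ k)),
      (∀ D : Derivation k (MvPolynomial σ k) (MvPolynomial σ k),
        D ∈ S ↔ ∑ j, pderiv j (D (X j)) = 0) ∧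
      (Nontrivial σ →
        ¬ IsNoetherianRing (UniversalEnvelopingAlgebra k S) ∧
          ¬ IsNoetherianRing (UniversalEnvelopingAlgebra k S)ᵐᵒᵖ) := by
  refine ⟨divergenceFree k σ, fun D => mem_divergenceFree, fun _ => ?_⟩
  rw [isNoetherianRing_enveloping_op_iff, and_self]
  exact not_isNoetherianRing_enveloping_divergenceFree

theorem special_subalgebra_and_not_noetherian (k : Type*) [Field k] [CharZero k]
    (n : ℕ) (hn : 1 ≤ n) :
    ∃ S : LieSubalgebra k (Derivation k (MvPolynomial (Fin n) k) (MvPolynomial (Fin n) k)),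
      (∀ D : Derivation k (MvPolynomial (Fin n) k) (MvPolynomial (Fin n) k),
        D ∈ S ↔ (∑ j : Fin n, MvPolynomial.pderiv j (D (MvPolynomial.X j))) = 0) ∧
      (2 ≤ n →
        ¬ IsNoetherianRing (UniversalEnvelopingAlgebra k S) ∧
          ¬ IsNoetherianRing (UniversalEnvelopingAlgebra k S)ᵐᵒᵖ) := by
  simpa only [Fin.nontrivial_iff_two_le] using
    special_subalgebra_and_not_noetherian_general k (Fin n)

end
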